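/- arXiv:2412.00764 — 2 statements merged into one kernel-verified Lean document; each statement's English description precedes it below -/
import Mathlib

section
/- For every n ≥ 0, the even moments u_{2n}(z) = ∫_{−z}^{z} x^{2n} e^{−x⁴} dx, viewed as functions of z > 0, satisfy the differential-recurrence relations z·u′_{2n}(z) = (2n+1)·u_{2n}(z) − 4·u_{2n+4}(z) and u′_{2n+2}(z) = z²·u′_{2n}(z) for all z > 0, where ′ denotes the derivative with respect to z. -/
/-!
Differentiating `u m z = ∫ x in (-z)..z, x ^ m * w x` in its endpoints gives
`z ^ m * w z + (-z) ^ m * w (-z)`, and passing from `m` to `m + 2` multiplies this by `z ^ 2`.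
Times `z`, it is the boundary term of the integration by parts of `x ^ (m + 1) * w' x`; for the
weight `w x = exp (-x ^ d)` the Pearson equation `x * w' x = -d * x ^ d * w x` turns that integral
into `-d * u (m + d) z`.
-/

open intervalIntegral

theorem hasDerivAt_integral_neg_self {E : Type*} [NormedAddCommGroup E] [NormedSpace ℝ E]
    [CompleteSpace E] {f : ℝ → E} (hf : Continuous f) (z : ℝ) :
    HasDerivAt (fun y ↦ ∫ x in (-y)..y, f x) (f z + f (-z)) z := by
  have primitive (y : ℝ) : HasDerivAt (fun t ↦ ∫ x in (0 : ℝ)..t, f x) (f y) y :=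
    hf.integral_hasStrictDerivAt 0 y |>.hasDerivAt
  have split : (fun y ↦ ∫ x in (-y)..y, f x) =
      fun y ↦ (∫ x in (0 : ℝ)..y, f x) - ∫ x in (0 : ℝ)..(-y), f x :=
    funext fun y ↦ (integral_interval_sub_left (hf.intervalIntegrable _ _)
      (hf.intervalIntegrable _ _)).symm
  rw [split]
  exact ((primitive z).sub ((primitive (-z)).scomp z (hasDerivAt_neg z))).congr_deriv (by simp)

/-- The `m`-th moment of the weight `w` truncated to `[-z, z]`. The integral is oriented, so for
`z < 0` it is minus the integral over `[z, -z]`. -/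
noncomputable def truncatedMoment (w : ℝ → ℝ) (m : ℕ) (z : ℝ) : ℝ :=
  ∫ x in (-z)..z, x ^ m * w x

namespace truncatedMoment

variable {w w' : ℝ → ℝ}

theorem deriv_eq (hw : Continuous w) (m : ℕ) (z : ℝ) :
    deriv (truncatedMoment w m) z = z ^ m * w z + (-z) ^ m * w (-z) :=
  (hasDerivAt_integral_neg_self ((continuous_pow m).mul hw) z).deriv

theorem deriv_add_two (hw : Continuous w) (m : ℕ) (z : ℝ) :
    deriv (truncatedMoment w (m + 2)) z = z ^ 2 * deriv (truncatedMoment w m) z := by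
  rw [deriv_eq hw, deriv_eq hw]
  ring

theorem succ_eq_sub_of_hasDerivAt (hw : ∀ x, HasDerivAt w (w' x) x) (hw' : Continuous w')
    (m : ℕ) (z : ℝ) :
    truncatedMoment w' (m + 1) z =
      z ^ (m + 1) * w z - (-z) ^ (m + 1) * w (-z) - (m + 1) * truncatedMoment w m z := by
  have by_parts := integral_mul_deriv_eq_deriv_mul (a := -z) (b := z)
    (fun x _ ↦ hasDerivAt_pow (m + 1) x) (fun x _ ↦ hw x)
    (Continuous.intervalIntegrable (by fun_prop) _ _) (hw'.intervalIntegrable _ _)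
  simpa only [truncatedMoment, add_tsub_cancel_right, Nat.cast_add_one, mul_assoc,
    integral_const_mul] using by_parts

theorem mul_deriv_eq (hw : ∀ x, HasDerivAt w (w' x) x) (hw' : Continuous w') (m : ℕ) (z : ℝ) :
    z * deriv (truncatedMoment w m) z =
      (m + 1) * truncatedMoment w m z + truncatedMoment w' (m + 1) z := by
  have hw_cont : Continuous w := continuous_iff_continuousAt.2 fun x ↦ (hw x).continuousAt
  rw [deriv_eq hw_cont, succ_eq_sub_of_hasDerivAt hw hw']
  ring

theorem succ_eq_of_pearson {c : ℝ} {d : ℕ} (hw : ∀ x, x * w' x = c * (x ^ d * w x))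
    (m : ℕ) (z : ℝ) :
    truncatedMoment w' (m + 1) z = c * truncatedMoment w (m + d) z := by
  simp only [truncatedMoment, ← integral_const_mul]
  congr with x
  linear_combination x ^ m * hw x

end truncatedMoment

theorem hasDerivAt_exp_neg_pow (d : ℕ) (x : ℝ) :
    HasDerivAt (fun y ↦ Real.exp (-y ^ d)) (Real.exp (-x ^ d) * -(d * x ^ (d - 1))) x :=
  (hasDerivAt_pow d x).fun_neg.exp

theorem exp_neg_pow_pearson (d : ℕ) (x : ℝ) :
    x * (Real.exp (-x ^ d) * -(d * x ^ (d - 1))) = -d * (x ^ d * Real.exp (-x ^ d)) := by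
  cases d with
  | zero => simp
  | succ d => rw [Nat.add_sub_cancel]; ring

theorem truncated_freud_moment_differential_recurrence_general (d m : ℕ) (u : ℕ → ℝ → ℝ)
    (hu : ∀ m z, u m z = ∫ x in (-z)..z, x ^ m * Real.exp (-x ^ d)) (z : ℝ) :
    z * deriv (u m) z = (m + 1) * u m z - d * u (m + d) z
      ∧ deriv (u (m + 2)) z = z ^ 2 * deriv (u m) z := by
  obtain rfl : u = truncatedMoment fun x ↦ Real.exp (-x ^ d) := funext₂ hu
  refine ⟨?_, truncatedMoment.deriv_add_two (by fun_prop) m z⟩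
  rw [truncatedMoment.mul_deriv_eq (hasDerivAt_exp_neg_pow d) (by fun_prop),
    truncatedMoment.succ_eq_of_pearson (exp_neg_pow_pearson d)]
  ring

/-- The even moments `u_{2n}(z) = ∫_{-z}^{z} x^{2n} e^{-x⁴} dx`, as functions of
`z > 0`, satisfy `z·u'_{2n}(z) = (2n+1)·u_{2n}(z) - 4·u_{2n+4}(z)` and
`u'_{2n+2}(z) = z²·u'_{2n}(z)`. -/
theorem truncated_freud_moment_differential_recurrence (n : ℕ) (u : ℕ → ℝ → ℝ)
    (hu : ∀ m z, u m z = ∫ x in (-z)..z, x ^ m * Real.exp (-x ^ 4)) :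
    ∀ z : ℝ, 0 < z →
      z * deriv (u (2 * n)) z = (2 * (n : ℝ) + 1) * u (2 * n) z - 4 * u (2 * n + 4) z
      ∧ deriv (u (2 * n + 2)) z = z ^ 2 * deriv (u (2 * n)) z := by
  intro z _
  exact_mod_cast truncated_freud_moment_differential_recurrence_general 4 (2 * n) u hu z
end

section
/- For z > 0, let P_n(·; z) denote the monic orthogonal polynomials for the weight e^{−x⁴} on [−z, z], with h_n(z) = ∫_{−z}^{z} P_n(x; z)² e^{−x⁴} dx and recurrence coefficients γ_n(z), and assume the coefficients of each P_n(·; z) are differentiable functions of z. Then for every n ≥ 2 the Toda-type equations hold: z·h′_n(z)/h_n(z) = (2n+1) − 4·[ γ_n·(γ_{n+1} + γ_n + γ_{n−1}) + γ_{n+1}·(γ_{n+2} + γ_{n+1} + γ_n) ] and z·γ′_n(z)/γ_n(z) = 4·[ γ_{n−1}·(γ_n + γ_{n−1} + γ_{n−2}) − γ_{n+1}·(γ_{n+2} + γ_{n+1} + γ_n) + 1/2 ], where ′ denotes the derivative with respect to z. -/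
/-!
Let `L_z` be integration against `e^{-x⁴}` over `[-z, z]`. Differentiating
`h_n(z) = L_z (P_n(·; z)²)` also differentiates `P_n`, but `∂P_n/∂z` has degree `< n` because
`P_n` is monic, so that contribution vanishes by orthogonality and only the endpoint terms
`e^{-z⁴} (P_n(z)² + P_n(-z)²)` survive. Multiplied by `z`, they are the boundary values of
`x P_n² e^{-x⁴}`, so integration by parts turns them into
`L_z (P_n² + 2 x P_n ∂P_n/∂x - 4 x⁴ P_n²)`. The recurrence evaluates the last moment as
`(A_n + A_{n+1}) h_n` with `A_n = γ_n (γ_{n+1} + γ_n + γ_{n-1})`, which is the equation for `h_n`.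
The equation for `γ_n = h_n / h_{n-1}` is the difference of two consecutive ones.
-/

open Polynomial Filter Topology

section Orthogonality

variable {R : Type*} [CommRing R] {L : R[X] →ₗ[R] R} {p : ℕ → R[X]} {γ : ℕ → R}

/-- `p` is the sequence of monic orthogonal polynomials of the moment functional `L`. -/
structure IsMonicOrthogonal (L : R[X] →ₗ[R] R) (p : ℕ → R[X]) : Prop where
  monic : ∀ n, (p n).Monic
  degree_eq : ∀ n, (p n).degree = n
  orthogonal : ∀ m n, m ≠ n → L (p m * p n) = 0

/-- The three-term recurrence, with coefficients `γ`, satisfied by the monic orthogonal polynomials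
of a symmetric functional. The otherwise meaningless `γ 0` is set to `0`, so that `p (n - 1)` may be
written with truncated subtraction. -/
structure HasSymmetricRecurrence (p : ℕ → R[X]) (γ : ℕ → R) : Prop where
  coeff_zero : γ 0 = 0
  X_mul_zero : X * p 0 = p 1
  X_mul_succ : ∀ n, X * p (n + 1) = p (n + 2) + C (γ (n + 1)) * p n

/-- The summand `A_n = γ_n (γ_{n+1} + γ_n + γ_{n-1})` of the Toda equations. Since `γ 0 = 0` in the
intended use, the truncated index `n - 1` is harmless at `n = 0`. -/
def freudTerm (γ : ℕ → R) (n : ℕ) : R :=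
  γ n * (γ (n + 1) + γ n + γ (n - 1))

namespace HasSymmetricRecurrence

theorem X_mul (hγ : HasSymmetricRecurrence p γ) (n : ℕ) :
    X * p n = p (n + 1) + C (γ n) * p (n - 1) := by
  cases n with
  | zero => simp [hγ.X_mul_zero, hγ.coeff_zero]
  | succ n => exact hγ.X_mul_succ n

theorem map_X_mul_mul (hγ : HasSymmetricRecurrence p γ) (n : ℕ) (q : R[X]) :
    L (X * p n * q) = L (p (n + 1) * q) + γ n * L (p (n - 1) * q) := by
  rw [hγ.X_mul, add_mul, mul_assoc, map_add, ← smul_eq_C_mul, map_smul, smul_eq_mul]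

end HasSymmetricRecurrence

namespace IsMonicOrthogonal

theorem natDegree_eq (hp : IsMonicOrthogonal L p) (n : ℕ) : (p n).natDegree = n :=
  natDegree_eq_of_degree_eq_some (hp.degree_eq n)

theorem coeff_self (hp : IsMonicOrthogonal L p) (n : ℕ) : (p n).coeff n = 1 := by
  simpa [hp.natDegree_eq] using (hp.monic n).coeff_natDegree

theorem map_mul_eq_zero_of_degree_lt (hp : IsMonicOrthogonal L p) {n : ℕ} {q : R[X]}
    (hq : q.degree < n) : L (p n * q) = 0 := by
  let S : Polynomial.Sequence R := ⟨p, hp.degree_eq⟩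
  have hspan : Submodule.span R (S '' Set.Iio n) = degreeLT R n :=
    S.span_degreeLT fun i _ => (hp.monic i).leadingCoeff.symm ▸ isUnit_one
  have hle : Submodule.span R (S '' Set.Iio n) ≤ (L ∘ₗ LinearMap.mulLeft R (p n)).ker := by
    rw [Submodule.span_le]
    rintro _ ⟨m, hm, rfl⟩
    exact hp.orthogonal n m (ne_of_gt hm)
  exact hle (hspan.symm ▸ mem_degreeLT.mpr hq)

theorem map_mul_of_natDegree_le (hp : IsMonicOrthogonal L p) {n : ℕ} {q : R[X]}
    (hq : q.natDegree ≤ n) : L (p n * q) = q.coeff n * L (p n ^ 2) := by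
  have hlt : (q - q.coeff n • p n).degree < n := by
    refine (degree_lt_iff_coeff_zero _ _).mpr fun j hj => ?_
    rcases hj.eq_or_lt with rfl | hj
    · simp [hp.coeff_self]
    · simp [coeff_eq_zero_of_natDegree_lt (hq.trans_lt hj),
        coeff_eq_zero_of_natDegree_lt ((hp.natDegree_eq n).trans_lt hj)]
  have hzero := hp.map_mul_eq_zero_of_degree_lt hlt
  rwa [mul_sub, map_sub, mul_smul_comm, map_smul, ← sq, smul_eq_mul, sub_eq_zero] at hzero

theorem map_mul_X_pow_mul (hp : IsMonicOrthogonal L p) (n k : ℕ) :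
    L (p (n + k) * (X ^ k * p n)) = L (p (n + k) ^ 2) := by
  have hdeg : (X ^ k * p n).natDegree ≤ n + k := by
    refine natDegree_mul_le.trans ?_
    rw [hp.natDegree_eq, add_comm]
    exact Nat.add_le_add_left (natDegree_X_pow_le k) n
  rw [hp.map_mul_of_natDegree_le hdeg, coeff_X_pow_mul, hp.coeff_self, one_mul]

theorem map_mul_X_mul_derivative (hp : IsMonicOrthogonal L p) (n : ℕ) :
    L (p n * (X * derivative (p n))) = n * L (p n ^ 2) := by
  have hdeg : (X * derivative (p n)).natDegree ≤ n := by
    refine (natDegree_le_iff_coeff_eq_zero).mpr fun j hj => ?_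
    obtain ⟨j, rfl⟩ := Nat.exists_eq_succ_of_ne_zero (Nat.ne_zero_of_lt hj)
    rw [coeff_X_mul, coeff_derivative,
      coeff_eq_zero_of_natDegree_lt ((hp.natDegree_eq n).trans_lt hj), zero_mul]
  have hcoeff : (X * derivative (p n)).coeff n = (n : R) := by
    cases n with
    | zero => simp
    | succ n => simp [coeff_derivative, hp.coeff_self]
  rw [hp.map_mul_of_natDegree_le hdeg, hcoeff]

theorem map_sq_succ (hp : IsMonicOrthogonal L p) (hγ : HasSymmetricRecurrence p γ) (n : ℕ) :
    L (p (n + 1) ^ 2) = γ (n + 1) * L (p n ^ 2) := by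
  calc L (p (n + 1) ^ 2)
      = L (p n * (X * p (n + 1))) := by
        rw [← hp.map_mul_X_pow_mul n 1, pow_one]; congr 1; ring
    _ = L (p n * p (n + 2)) + γ (n + 1) * L (p n ^ 2) := by
        rw [hγ.X_mul_succ, mul_add, map_add, ← smul_eq_C_mul, mul_smul_comm, map_smul, ← sq,
          smul_eq_mul]
    _ = γ (n + 1) * L (p n ^ 2) := by rw [hp.orthogonal n (n + 2) (by simp), zero_add]

theorem map_X_pow_two_mul_sq (hp : IsMonicOrthogonal L p) (hγ : HasSymmetricRecurrence p γ)
    (n : ℕ) : L (X ^ 2 * p n ^ 2) = (γ (n + 1) + γ n) * L (p n ^ 2) := by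
  have hlower : γ n * L (p (n - 1) * (X * p n)) = γ n * L (p n ^ 2) := by
    cases n with
    | zero => simp [hγ.coeff_zero]
    | succ n =>
      rw [Nat.add_sub_cancel, ← hp.map_mul_X_pow_mul n 1, pow_one, mul_left_comm]
      congr 2; ring
  calc L (X ^ 2 * p n ^ 2)
      = L (X * p n * (X * p n)) := by congr 1; ring
    _ = L (p (n + 1) ^ 2) + γ n * L (p n ^ 2) := by
        rw [hγ.map_X_mul_mul, hlower, ← hp.map_mul_X_pow_mul n 1, pow_one]
    _ = (γ (n + 1) + γ n) * L (p n ^ 2) := by rw [hp.map_sq_succ hγ]; ring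

theorem map_X_pow_three_mul_succ_mul (hp : IsMonicOrthogonal L p)
    (hγ : HasSymmetricRecurrence p γ) (n : ℕ) :
    L (X ^ 3 * (p (n + 1) * p n)) = freudTerm γ (n + 1) * L (p n ^ 2) := by
  have hlower : γ n * L (p (n - 1) * (X ^ 2 * p (n + 1))) = γ n * L (p (n + 1) ^ 2) := by
    cases n with
    | zero => simp [hγ.coeff_zero]
    | succ n =>
      rw [Nat.add_sub_cancel, ← hp.map_mul_X_pow_mul n 2]
      congr 2; ring
  calc L (X ^ 3 * (p (n + 1) * p n))
      = L (X * p n * (X ^ 2 * p (n + 1))) := by congr 1; ring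
    _ = L (X ^ 2 * p (n + 1) ^ 2) + γ n * L (p (n + 1) ^ 2) := by
        rw [hγ.map_X_mul_mul, hlower]; congr 2; ring
    _ = freudTerm γ (n + 1) * L (p n ^ 2) := by
        rw [hp.map_X_pow_two_mul_sq hγ, hp.map_sq_succ hγ, freudTerm, Nat.add_sub_cancel]; ring

theorem map_X_pow_four_mul_sq (hp : IsMonicOrthogonal L p) (hγ : HasSymmetricRecurrence p γ)
    (n : ℕ) : L (X ^ 4 * p n ^ 2) = (freudTerm γ n + freudTerm γ (n + 1)) * L (p n ^ 2) := by
  have hlower : γ n * L (p (n - 1) * (X ^ 3 * p n)) = freudTerm γ n * L (p n ^ 2) := by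
    cases n with
    | zero => simp [freudTerm, hγ.coeff_zero]
    | succ n =>
      rw [hp.map_sq_succ hγ, mul_left_comm (freudTerm γ (n + 1)),
        ← hp.map_X_pow_three_mul_succ_mul hγ, Nat.add_sub_cancel]
      congr 2; ring
  calc L (X ^ 4 * p n ^ 2)
      = L (X * p n * (X ^ 3 * p n)) := by congr 1; ring
    _ = L (X ^ 3 * (p (n + 1) * p n)) + freudTerm γ n * L (p n ^ 2) := by
        rw [hγ.map_X_mul_mul, hlower]; congr 2; ring
    _ = (freudTerm γ n + freudTerm γ (n + 1)) * L (p n ^ 2) := by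
        rw [hp.map_X_pow_three_mul_succ_mul hγ]; ring

end IsMonicOrthogonal

end Orthogonality

section Deformation

variable {𝕜 : Type*} [NontriviallyNormedField 𝕜] {p q : 𝕜 → 𝕜[X]} {p' q' : 𝕜[X]} {t : 𝕜} {n : ℕ}

/-- The one-parameter family of polynomials `p` has the coefficientwise derivative `p'` at `t`.
(There is no canonical norm on `𝕜[X]` to which `HasDerivAt` could refer.) -/
def HasCoeffDerivAt (p : 𝕜 → 𝕜[X]) (p' : 𝕜[X]) (t : 𝕜) : Prop :=
  ∀ k, HasDerivAt (fun s => (p s).coeff k) (p'.coeff k) t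

namespace HasCoeffDerivAt

theorem mul (hp : HasCoeffDerivAt p p' t) (hq : HasCoeffDerivAt q q' t) :
    HasCoeffDerivAt (fun s => p s * q s) (p' * q t + p t * q') t := by
  intro k
  simp only [coeff_mul, coeff_add, ← Finset.sum_add_distrib]
  exact HasDerivAt.fun_sum fun ij _ => (hp ij.1).mul (hq ij.2)

theorem coeff_eq_zero_of_eventually_const (hp : HasCoeffDerivAt p p' t) {k : ℕ} {c : 𝕜}
    (hc : ∀ᶠ s in 𝓝 t, (p s).coeff k = c) : p'.coeff k = 0 :=
  ((hasDerivAt_const t c).congr_of_eventuallyEq hc).unique (hp k) |>.symm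

theorem natDegree_le (hp : HasCoeffDerivAt p p' t) (hn : ∀ᶠ s in 𝓝 t, (p s).natDegree ≤ n) :
    p'.natDegree ≤ n := by
  refine natDegree_le_iff_coeff_eq_zero.mpr fun k hk =>
    hp.coeff_eq_zero_of_eventually_const (c := 0) ?_
  filter_upwards [hn] with s hs using coeff_eq_zero_of_natDegree_lt (hs.trans_lt hk)

theorem degree_lt_of_monic (hp : HasCoeffDerivAt p p' t) (hmonic : ∀ᶠ s in 𝓝 t, (p s).Monic)
    (hn : ∀ᶠ s in 𝓝 t, (p s).natDegree = n) : p'.degree < n := by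
  have hlead : p'.coeff n = 0 := by
    refine hp.coeff_eq_zero_of_eventually_const (c := 1) ?_
    filter_upwards [hmonic, hn] with s hs hsn using hsn ▸ hs.coeff_natDegree
  refine (degree_lt_iff_coeff_zero _ _).mpr fun k hk => ?_
  rcases hk.eq_or_lt with rfl | hk
  · exact hlead
  · exact coeff_eq_zero_of_natDegree_lt <|
      (hp.natDegree_le (hn.mono fun _ hs => hs.le)).trans_lt hk

theorem exists_of_differentiableAt (hn : ∀ᶠ s in 𝓝 t, (p s).natDegree ≤ n)
    (hp : ∀ k, DifferentiableAt 𝕜 (fun s => (p s).coeff k) t) :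
    ∃ p', HasCoeffDerivAt p p' t := by
  refine ⟨∑ k ∈ Finset.range (n + 1), monomial k (deriv (fun s => (p s).coeff k) t), fun k => ?_⟩
  have hzero (hk : n < k) : deriv (fun s => (p s).coeff k) t = 0 := by
    have hconst : (fun s => (p s).coeff k) =ᶠ[𝓝 t] fun _ => 0 := by
      filter_upwards [hn] with s hs using coeff_eq_zero_of_natDegree_lt (hs.trans_lt hk)
    rw [hconst.deriv_eq, deriv_const]
  refine (hp k).hasDerivAt.congr_deriv (Eq.symm ?_)
  simp only [finsetSum_coeff, coeff_monomial, Finset.sum_ite_eq', Finset.mem_range]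
  split_ifs with hk
  · rfl
  · exact (hzero (by omega)).symm

theorem hasDerivAt_linearMap {L : 𝕜 → 𝕜[X] →ₗ[𝕜] 𝕜} {L' : 𝕜[X] →ₗ[𝕜] 𝕜}
    (hL : ∀ q, HasDerivAt (fun s => L s q) (L' q) t) (hp : HasCoeffDerivAt p p' t)
    (hn : ∀ᶠ s in 𝓝 t, (p s).natDegree ≤ n) :
    HasDerivAt (fun s => L s (p s)) (L t p' + L' (p t)) t := by
  have hexpand (M : 𝕜[X] →ₗ[𝕜] 𝕜) {q : 𝕜[X]} (hq : q.natDegree ≤ n) :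
      M q = ∑ k ∈ Finset.range (n + 1), q.coeff k * M (X ^ k) := by
    conv_lhs => rw [q.as_sum_range_C_mul_X_pow' (Nat.lt_succ_of_le hq)]
    simp only [← smul_eq_C_mul, map_sum, map_smul, smul_eq_mul]
  have hsum := HasDerivAt.fun_sum (u := Finset.range (n + 1)) fun k _ =>
    (hp k).mul (hL (X ^ k))
  rw [hexpand (L t) (hp.natDegree_le hn), hexpand L' hn.self_of_nhds, ← Finset.sum_add_distrib]
  refine hsum.congr_of_eventuallyEq ?_
  filter_upwards [hn] with s hs using hexpand (L s) hs

end HasCoeffDerivAt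

theorem IsMonicOrthogonal.hasDerivAt_map_sq {L : 𝕜 → 𝕜[X] →ₗ[𝕜] 𝕜} {L' : 𝕜[X] →ₗ[𝕜] 𝕜}
    {p : 𝕜 → ℕ → 𝕜[X]} (hL : ∀ q, HasDerivAt (fun s => L s q) (L' q) t)
    (hp : ∀ᶠ s in 𝓝 t, IsMonicOrthogonal (L s) (p s))
    (hdiff : ∀ k, DifferentiableAt 𝕜 (fun s => (p s n).coeff k) t) :
    HasDerivAt (fun s => L s (p s n ^ 2)) (L' (p t n ^ 2)) t := by
  have hdeg : ∀ᶠ s in 𝓝 t, (p s n).natDegree = n := hp.mono fun s hs => hs.natDegree_eq n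
  obtain ⟨p', hp'⟩ :=
    HasCoeffDerivAt.exists_of_differentiableAt (hdeg.mono fun _ hs => hs.le) hdiff
  have hzero : L t (p t n * p') = 0 :=
    hp.self_of_nhds.map_mul_eq_zero_of_degree_lt <|
      hp'.degree_lt_of_monic (hp.mono fun s hs => hs.monic n) hdeg
  have hdegsq : ∀ᶠ s in 𝓝 t, (p s n * p s n).natDegree ≤ n + n :=
    hdeg.mono fun s hs => natDegree_mul_le.trans (by rw [hs])
  have hderiv := (hp'.mul hp').hasDerivAt_linearMap hL hdegsq
  rw [mul_comm p', map_add, hzero, add_zero, zero_add] at hderiv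
  simpa only [sq] using hderiv

end Deformation

section LogDeriv

variable {𝕜 : Type*} [NontriviallyNormedField 𝕜] {f g : 𝕜 → 𝕜} {c d z : 𝕜}

theorem mul_logDeriv_of_hasDerivAt (hz : z ≠ 0) (hf₀ : f z ≠ 0)
    (hf : HasDerivAt f (c * f z / z) z) : z * logDeriv f z = c := by
  rw [logDeriv_apply, hf.deriv]
  field_simp

theorem mul_logDeriv_div_of_hasDerivAt (hz : z ≠ 0) (hf₀ : f z ≠ 0) (hg₀ : g z ≠ 0)
    (hf : HasDerivAt f (c * f z / z) z) (hg : HasDerivAt g (d * g z / z) z) :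
    z * logDeriv (fun s => f s / g s) z = c - d := by
  rw [logDeriv_div z hf₀ hg₀ hf.differentiableAt hg.differentiableAt, mul_sub,
    mul_logDeriv_of_hasDerivAt hz hf₀ hf, mul_logDeriv_of_hasDerivAt hz hg₀ hg]

end LogDeriv

section Weight

/-- The moment functional `q ↦ ∫_a^b q w` of the weight `w`. -/
noncomputable def momentFunctional (w : C(ℝ, ℝ)) (a b : ℝ) : ℝ[X] →ₗ[ℝ] ℝ where
  toFun q := ∫ x in a..b, q.eval x * w x
  map_add' p q := by
    simp only [eval_add, add_mul]
    exact intervalIntegral.integral_add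
      ((p.continuous.mul w.continuous).intervalIntegrable a b)
      ((q.continuous.mul w.continuous).intervalIntegrable a b)
  map_smul' c q := by
    simp only [eval_smul, smul_eq_mul, mul_assoc, intervalIntegral.integral_const_mul,
      RingHom.id_apply]

/-- The functional `q ↦ q(z) w(z) + q(-z) w(-z)`: the rate of change of the moments over `[-z, z]`
as `z` varies. -/
noncomputable def endpointFunctional (w : C(ℝ, ℝ)) (z : ℝ) : ℝ[X] →ₗ[ℝ] ℝ :=
  w z • leval z + w (-z) • leval (-z)

theorem endpointFunctional_apply (w : C(ℝ, ℝ)) (z : ℝ) (q : ℝ[X]) :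
    endpointFunctional w z q = q.eval z * w z + q.eval (-z) * w (-z) := by
  simp [endpointFunctional, mul_comm]

theorem hasDerivAt_momentFunctional (w : C(ℝ, ℝ)) (z : ℝ) (q : ℝ[X]) :
    HasDerivAt (fun s => momentFunctional w (-s) s q) (endpointFunctional w z q) z := by
  have hcont : Continuous fun x => q.eval x * w x := q.continuous.mul w.continuous
  have hprim (s : ℝ) := intervalIntegral.integral_hasDerivAt_right
    (hcont.intervalIntegrable 0 s) (hcont.stronglyMeasurableAtFilter _ _) hcont.continuousAt
  have hsplit : (fun s => momentFunctional w (-s) s q) =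
      fun s => (∫ x in (0 : ℝ)..s, q.eval x * w x) - ∫ x in (0 : ℝ)..(-s), q.eval x * w x := by
    funext s
    exact (intervalIntegral.integral_interval_sub_left
      (hcont.intervalIntegrable 0 s) (hcont.intervalIntegrable 0 (-s))).symm
  rw [hsplit]
  refine ((hprim z).sub ((hprim (-z)).comp z (hasDerivAt_neg z))).congr_deriv ?_
  rw [endpointFunctional_apply]
  ring

theorem momentFunctional_derivative_add_mul {w : C(ℝ, ℝ)} {v : ℝ[X]}
    (hw : ∀ x, HasDerivAt w (v.eval x * w x) x) (a b : ℝ) (q : ℝ[X]) :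
    momentFunctional w a b (derivative q + v * q) = q.eval b * w b - q.eval a * w a := by
  refine intervalIntegral.integral_eq_sub_of_hasDerivAt (f := fun x => q.eval x * w x)
    (fun x _ => ?_) (((derivative q + v * q).continuous.mul w.continuous).intervalIntegrable a b)
  refine ((q.hasDerivAt x).mul (hw x)).congr_deriv ?_
  rw [eval_add, eval_mul]
  ring

theorem mul_endpointFunctional {w : C(ℝ, ℝ)} {v : ℝ[X]}
    (hw : ∀ x, HasDerivAt w (v.eval x * w x) x) (z : ℝ) (q : ℝ[X]) :
    z * endpointFunctional w z q =
      momentFunctional w (-z) z (derivative (X * q) + v * (X * q)) := by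
  rw [momentFunctional_derivative_add_mul hw, endpointFunctional_apply]
  simp only [eval_mul, eval_X]
  ring

end Weight

section Freud

/-- The Freud weight `e^{-x⁴}`. -/
noncomputable def freudWeight : C(ℝ, ℝ) where
  toFun x := Real.exp (-x ^ 4)

theorem hasDerivAt_freudWeight (x : ℝ) :
    HasDerivAt freudWeight ((C (-4) * X ^ 3 : ℝ[X]).eval x * freudWeight x) x := by
  refine ((hasDerivAt_pow 4 x).neg.exp).congr_deriv ?_
  simp only [freudWeight, ContinuousMap.coe_mk, eval_mul, eval_C, eval_pow, eval_X, Pi.neg_apply]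
  push_cast
  ring

theorem freud_mul_endpointFunctional_sq {z : ℝ} {p : ℕ → ℝ[X]} {γ : ℕ → ℝ}
    (hp : IsMonicOrthogonal (momentFunctional freudWeight (-z) z) p)
    (hγ : HasSymmetricRecurrence p γ) (n : ℕ) :
    z * endpointFunctional freudWeight z (p n ^ 2) =
      (2 * n + 1 - 4 * (freudTerm γ n + freudTerm γ (n + 1))) *
        momentFunctional freudWeight (-z) z (p n ^ 2) := by
  have hpoly : derivative (X * p n ^ 2) + C (-4) * X ^ 3 * (X * p n ^ 2) =
      p n ^ 2 + (2 : ℝ) • (p n * (X * derivative (p n))) + (-4 : ℝ) • (X ^ 4 * p n ^ 2) := by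
    simp only [derivative_mul, derivative_X, derivative_sq, smul_eq_C_mul]
    ring
  rw [mul_endpointFunctional hasDerivAt_freudWeight, hpoly, map_add, map_add, map_smul, map_smul,
    hp.map_mul_X_mul_derivative, hp.map_X_pow_four_mul_sq hγ]
  simp only [smul_eq_mul]
  ring

theorem freud_hasDerivAt_map_sq {z : ℝ} (hz : z ≠ 0) {p : ℝ → ℕ → ℝ[X]} {γ : ℕ → ℝ} {n : ℕ}
    (hp : ∀ᶠ s in 𝓝 z, IsMonicOrthogonal (momentFunctional freudWeight (-s) s) (p s))
    (hγ : HasSymmetricRecurrence (p z) γ)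
    (hdiff : ∀ k, DifferentiableAt ℝ (fun s => (p s n).coeff k) z) :
    HasDerivAt (fun s => momentFunctional freudWeight (-s) s (p s n ^ 2))
      ((2 * n + 1 - 4 * (freudTerm γ n + freudTerm γ (n + 1))) *
        momentFunctional freudWeight (-z) z (p z n ^ 2) / z) z := by
  rw [← freud_mul_endpointFunctional_sq hp.self_of_nhds hγ, mul_div_cancel_left₀ _ hz]
  exact IsMonicOrthogonal.hasDerivAt_map_sq (hasDerivAt_momentFunctional freudWeight z) hp hdiff

end Freud

/-- Toda-type equations for `h_n(z)` and the recurrence coefficients `γ_n(z)` of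
the monic orthogonal polynomials for the weight `e^{-x⁴}` on `[-z, z]`:
`z·h'_n/h_n = (2n+1) - 4[γ_n(γ_{n+1}+γ_n+γ_{n-1}) + γ_{n+1}(γ_{n+2}+γ_{n+1}+γ_n)]`
and `z·γ'_n/γ_n = 4[γ_{n-1}(γ_n+γ_{n-1}+γ_{n-2}) - γ_{n+1}(γ_{n+2}+γ_{n+1}+γ_n) + 1/2]`. -/
theorem truncated_freud_toda (z : ℝ) (hz : 0 < z)
    (P : ℕ → ℝ → Polynomial ℝ) (γ h : ℕ → ℝ → ℝ)
    (hmonic : ∀ n z, 0 < z → (P n z).Monic)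
    (hdeg : ∀ n z, 0 < z → (P n z).natDegree = n)
    (horth : ∀ z, 0 < z → ∀ m n, m ≠ n →
      ∫ x in (-z)..z, (P m z).eval x * (P n z).eval x * Real.exp (-x ^ 4) = 0)
    (hh : ∀ n z, 0 < z → h n z = ∫ x in (-z)..z, ((P n z).eval x) ^ 2 * Real.exp (-x ^ 4))
    (hhpos : ∀ n z, 0 < z → 0 < h n z)
    (hP0 : ∀ z, 0 < z → P 0 z = 1) (hP1 : ∀ z, 0 < z → P 1 z = Polynomial.X)
    (hrec : ∀ n z, 0 < z →
      Polynomial.X * P (n + 1) z = P (n + 2) z + Polynomial.C (γ (n + 1) z) * P n z)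
    (hγ0 : ∀ z, 0 < z → γ 0 z = 0)
    (hγ : ∀ n z, 0 < z → γ (n + 1) z = h (n + 1) z / h n z)
    (hdiffP : ∀ n k, DifferentiableOn ℝ (fun w => (P n w).coeff k) (Set.Ioi (0 : ℝ)))
    (n : ℕ) (hn : 2 ≤ n) :
    z * deriv (h n) z / h n z =
      (2 * (n : ℝ) + 1)
        - 4 * (γ n z * (γ (n + 1) z + γ n z + γ (n - 1) z)
            + γ (n + 1) z * (γ (n + 2) z + γ (n + 1) z + γ n z))
    ∧ z * deriv (γ n) z / γ n z =
      4 * (γ (n - 1) z * (γ n z + γ (n - 1) z + γ (n - 2) z)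
          - γ (n + 1) z * (γ (n + 2) z + γ (n + 1) z + γ n z) + 1 / 2) := by
  have hp (s : ℝ) (hs : 0 < s) :
      IsMonicOrthogonal (momentFunctional freudWeight (-s) s) (P · s) :=
    ⟨(hmonic · s hs),
      fun k => (degree_eq_iff_natDegree_eq (hmonic k s hs).ne_zero).mpr (hdeg k s hs),
      by simpa [momentFunctional, freudWeight] using horth s hs⟩
  have hrecz : HasSymmetricRecurrence (P · z) (γ · z) :=
    ⟨hγ0 z hz, by simp [hP0 z hz, hP1 z hz], (hrec · z hz)⟩
  have hh_eq (k : ℕ) : h k =ᶠ[𝓝 z] fun s => momentFunctional freudWeight (-s) s (P k s ^ 2) := by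
    filter_upwards [lt_mem_nhds hz] with s hs
    simp [hh k s hs, momentFunctional, freudWeight]
  have hderiv (k : ℕ) : HasDerivAt (h k)
      ((2 * k + 1 - 4 * (freudTerm (γ · z) k + freudTerm (γ · z) (k + 1))) * h k z / z) z := by
    rw [(hh_eq k).hasDerivAt_iff, (hh_eq k).eq_of_nhds]
    exact freud_hasDerivAt_map_sq hz.ne' (p := fun s k => P k s) ((lt_mem_nhds hz).mono hp) hrecz
      fun i => (hdiffP k i).differentiableAt (Ioi_mem_nhds hz)
  have hne (k : ℕ) : h k z ≠ 0 := (hhpos k z hz).ne'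
  obtain ⟨m, rfl⟩ := Nat.exists_eq_add_of_le' hn
  have hγ_eq : γ (m + 2) =ᶠ[𝓝 z] fun s => h (m + 2) s / h (m + 1) s := by
    filter_upwards [lt_mem_nhds hz] with s hs using hγ (m + 1) s hs
  simp only [mul_div_assoc, ← logDeriv_apply]
  refine ⟨mul_logDeriv_of_hasDerivAt hz.ne' (hne _) (hderiv (m + 2)), ?_⟩
  rw [(logDeriv_congr_nhds hγ_eq).eq_of_nhds,
    mul_logDeriv_div_of_hasDerivAt hz.ne' (hne _) (hne _) (hderiv (m + 2)) (hderiv (m + 1))]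
  simp only [freudTerm, Nat.add_one_sub_one, add_tsub_cancel_right]
  push_cast
  ring
end
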